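/- arXiv:1903.09526 — 3 statements merged into one kernel-verified Lean document; each statement's English description precedes it below -/
import Mathlib

section
/- Let m ≥ 2 be an integer and let β ∈ [1/2, 1). Then every β-harmonic function u : T_m → ℝ that is not constant is unbounded; equivalently, every bounded β-harmonic function on T_m is constant. -/
open MeasureTheory Filter

noncomputable def psiV (m : ℕ) (x : List (Fin m)) : ℝ :=
  ∑ i : Fin x.length, ((x.get i : ℕ) : ℝ) * ((m : ℝ) ^ (i.1 + 1))⁻¹

noncomputable def psiB (m : ℕ) (π : ℕ → Fin m) : ℝ :=
  ∑' k : ℕ, ((π k : ℕ) : ℝ) * ((m : ℝ) ^ (k + 1))⁻¹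

def trunc (m : ℕ) (π : ℕ → Fin m) (k : ℕ) : List (Fin m) :=
  List.ofFn (fun i : Fin k => π i)

noncomputable def Ix (m : ℕ) (x : List (Fin m)) : Set ℝ :=
  Set.Icc (psiV m x) (psiV m x + ((m : ℝ) ^ x.length)⁻¹)

def BHarmonic (m : ℕ) (β : ℝ) (u : List (Fin m) → ℝ) : Prop :=
  u [] = (1 / (m : ℝ)) * ∑ j : Fin m, u [j] ∧
  ∀ x : List (Fin m), x ≠ [] →
    u x = β * u x.dropLast + ((1 - β) / (m : ℝ)) * ∑ i : Fin m, u (x ++ [i])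

def BoundaryDatum (m : ℕ) (u : List (Fin m) → ℝ) (g : ℝ → ℝ) : Prop :=
  ∀ π : ℕ → Fin m,
    Tendsto (fun k => u (trunc m π k)) atTop (nhds (g (psiB m π)))

def BoundedFun (m : ℕ) (u : List (Fin m) → ℝ) : Prop :=
  ∃ C : ℝ, ∀ x : List (Fin m), |u x| ≤ C

/-!
If stepping up to `x` raises a `β`-subharmonic function `u` by `d > 0`, then the mean increment from
`x` to its successors is at least `β / (1 - β) * d`, which is at least `d` because `1 / 2 ≤ β`, so
some successor gains at least `d` again. Iterating, `u` climbs by at least `d` at each step along a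
path and is unbounded above. Hence a `u` which is bounded above never increases from a vertex to a
successor; the mean of its increments at the root is nonnegative, so they vanish, and this
propagates down the tree.
-/

/-- `β`-subharmonic functions on the `m`-branching tree: the two equations of `BHarmonic` weakened
to inequalities, with the value at a vertex at most the weighted mean over its neighbours. They are
the class for which the one-sided Liouville theorem `stmt1_general` holds. -/
def BSubharmonic (m : ℕ) (β : ℝ) (u : List (Fin m) → ℝ) : Prop :=
  u [] ≤ (1 / (m : ℝ)) * ∑ j : Fin m, u [j] ∧
  ∀ x : List (Fin m), x ≠ [] →
    u x ≤ β * u x.dropLast + ((1 - β) / (m : ℝ)) * ∑ i : Fin m, u (x ++ [i])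

section

variable {m : ℕ} {β : ℝ} {u : List (Fin m) → ℝ}

theorem BHarmonic.bSubharmonic (hu : BHarmonic m β u) : BSubharmonic m β u :=
  ⟨hu.1.le, fun x hx => (hu.2 x hx).le⟩

theorem BoundedFun.bddAbove_range (hb : BoundedFun m u) : BddAbove (Set.range u) := by
  obtain ⟨C, hC⟩ := hb
  exact ⟨C, Set.forall_mem_range.2 fun x => (le_abs_self _).trans (hC x)⟩

namespace BSubharmonic

-- The root is included: there `[].dropLast = []`, and the left-hand side is `0`.
theorem mul_sub_dropLast_le_sum_sub (hu : BSubharmonic m β u) (hβ1 : 1 / 2 ≤ β) (hβ2 : β < 1)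
    {x : List (Fin m)} (hx : u x.dropLast ≤ u x) :
    m * (u x - u x.dropLast) ≤ ∑ i, (u (x ++ [i]) - u x) := by
  obtain rfl | hm := m.eq_zero_or_pos
  · simp
  have hm' : (0 : ℝ) < m := by exact_mod_cast hm
  suffices h : u x - u x.dropLast ≤ (∑ i, u (x ++ [i])) / m - u x by
    rw [Finset.sum_sub_distrib, Fin.sum_const, nsmul_eq_mul]
    rw [le_sub_iff_add_le, le_div_iff₀ hm'] at h
    linarith
  obtain rfl | hne := eq_or_ne x []
  · have := hu.1
    rw [one_div_mul_eq_div] at this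
    simpa using this
  have hmean : β * (u x - u x.dropLast) ≤ (1 - β) * ((∑ i, u (x ++ [i])) / m - u x) := by
    linear_combination hu.2 x hne
  refine le_of_mul_le_mul_left (le_trans ?_ hmean) (sub_pos.2 hβ2)
  exact mul_le_mul_of_nonneg_right (by linarith) (sub_nonneg.2 hx)

theorem exists_sub_dropLast_le_sub (hu : BSubharmonic m β u) (hβ1 : 1 / 2 ≤ β) (hβ2 : β < 1)
    {x : List (Fin m)} (hx : u x.dropLast < u x) :
    ∃ i, u x - u x.dropLast ≤ u (x ++ [i]) - u x := by
  have hne : x ≠ [] := by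
    rintro rfl
    exact hx.false
  have hsum : ∑ _i : Fin m, (u x - u x.dropLast) ≤ ∑ i, (u (x ++ [i]) - u x) := by
    simpa only [Fin.sum_const, nsmul_eq_mul] using
      hu.mul_sub_dropLast_le_sum_sub hβ1 hβ2 hx.le
  obtain ⟨i, -, hi⟩ := Finset.exists_le_of_sum_le ⟨x.head hne, Finset.mem_univ _⟩ hsum
  exact ⟨i, hi⟩

theorem exists_add_nsmul_le (hu : BSubharmonic m β u) (hβ1 : 1 / 2 ≤ β) (hβ2 : β < 1)
    {x : List (Fin m)} (hx : u x.dropLast < u x) (n : ℕ) :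
    ∃ y, u x - u x.dropLast ≤ u y - u y.dropLast ∧ u x + n • (u x - u x.dropLast) ≤ u y := by
  induction n with
  | zero => exact ⟨x, le_rfl, by simp⟩
  | succ n ih =>
    obtain ⟨y, hinc, hy⟩ := ih
    obtain ⟨i, hi⟩ := hu.exists_sub_dropLast_le_sub hβ1 hβ2 (x := y) (by linarith)
    refine ⟨y ++ [i], ?_, ?_⟩
    · simpa only [List.dropLast_concat] using hinc.trans hi
    · rw [succ_nsmul]
      linarith

theorem le_dropLast (hu : BSubharmonic m β u) (hβ1 : 1 / 2 ≤ β) (hβ2 : β < 1)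
    (hb : BddAbove (Set.range u)) (x : List (Fin m)) : u x ≤ u x.dropLast := by
  by_contra! hx
  obtain ⟨C, hC⟩ := hb
  obtain ⟨n, hn⟩ := exists_lt_nsmul (sub_pos.2 hx) (C - u x)
  obtain ⟨y, -, hy⟩ := hu.exists_add_nsmul_le hβ1 hβ2 hx n
  linarith [hC (Set.mem_range_self y)]

theorem append_singleton_eq (hu : BSubharmonic m β u) (hβ1 : 1 / 2 ≤ β) (hβ2 : β < 1)
    (hb : BddAbove (Set.range u)) {x : List (Fin m)} (hx : u x = u x.dropLast) (i : Fin m) :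
    u (x ++ [i]) = u x := by
  have hnonpos : ∀ j ∈ Finset.univ, u (x ++ [j]) - u x ≤ 0 := fun j _ => by
    simpa using hu.le_dropLast hβ1 hβ2 hb (x ++ [j])
  have hsum : 0 ≤ ∑ j, (u (x ++ [j]) - u x) := by
    simpa [hx] using hu.mul_sub_dropLast_le_sum_sub hβ1 hβ2 hx.ge
  have hzero := (Finset.sum_nonpos hnonpos).antisymm hsum
  exact sub_eq_zero.1 ((Finset.sum_eq_zero_iff_of_nonpos hnonpos).1 hzero i (Finset.mem_univ i))

end BSubharmonic

end

theorem stmt1_general {m : ℕ} {β : ℝ} (hβ1 : 1 / 2 ≤ β) (hβ2 : β < 1) {u : List (Fin m) → ℝ}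
    (hu : BSubharmonic m β u) (hb : BddAbove (Set.range u)) (x : List (Fin m)) : u x = u [] := by
  suffices h : u x = u x.dropLast ∧ u x = u [] from h.2
  induction x using List.reverseRecOn with
  | nil => exact ⟨rfl, rfl⟩
  | append_singleton x i ih =>
    have hi : u (x ++ [i]) = u x := hu.append_singleton_eq hβ1 hβ2 hb ih.1 i
    exact ⟨by rwa [List.dropLast_concat], hi.trans ih.2⟩

theorem stmt1 (m : ℕ) (hm : 2 ≤ m) (β : ℝ) (hβ1 : 1 / 2 ≤ β) (hβ2 : β < 1)
    (u : List (Fin m) → ℝ) (hu : BHarmonic m β u) (hb : BoundedFun m u) :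
    ∀ x : List (Fin m), u x = u [] :=
  stmt1_general hβ1 hβ2 hu.bSubharmonic hb.bddAbove_range
end

section
/- Let m ≥ 2 be an integer, g ∈ C²([0,1]), η = (η_0,...,η_{m-1}) ∈ ℝ^m, and let u be the unique bounded 0-harmonic function on T_m with boundary datum g (explicitly, u(x) = ⨍_{I_x} g(t) dt). Then for every branch π with truncations x_k, lim_{k→∞} m^k · Σ_{i=0}^{m-1} η_i·(u((x_k,i)) − u(x_k)) = g'(ψ(π)) · Σ_{i=0}^{m-1} η_i·(2i+1−m)/(2m). -/
open MeasureTheory Filter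

/-!
An affine function has its value at the centre of an interval as its average there. So, expanding
`g` to first order at `p`, the average of `g` over an interval contained in the ball of radius `r`
about `p` is `g p + (c - p) g' + o(r)`, where `c` is the centre of the interval. If `x` is the
truncation of `π` at level `k`, both `I_x` and its `i`-th child lie within `m⁻ᵏ` of `p = ψ(π)`, and
their centres differ by exactly `m⁻ᵏ` times the `i`-th normal weight.
-/

open Set Metric Asymptotics Topology

section Average

variable {E : Type*} [NormedAddCommGroup E] [NormedSpace ℝ E]

theorem norm_setAverage_le_of_norm_le_const {α : Type*} [MeasurableSpace α] {μ : Measure α}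
    {s : Set α} {f : α → E} {C : ℝ} (hs₀ : μ s ≠ 0) (hs_top : μ s ≠ ⊤)
    (hC : ∀ x ∈ s, ‖f x‖ ≤ C) : ‖⨍ x in s, f x ∂μ‖ ≤ C := by
  have hpos : 0 < μ.real s := ENNReal.toReal_pos hs₀ hs_top
  rw [setAverage_eq, norm_smul, Real.norm_of_nonneg (inv_pos.2 hpos).le, inv_mul_le_iff₀' hpos]
  exact norm_setIntegral_le_of_norm_le_const hs_top.lt_top hC

theorem setAverage_Icc_eq {a b : ℝ} (hab : a ≤ b) (f : ℝ → E) :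
    ⨍ t in Icc a b, f t = (b - a)⁻¹ • ∫ t in a..b, f t := by
  rw [setAverage_congr Ioc_ae_eq_Icc.symm, ← uIoc_of_le hab, interval_average_eq]

theorem setAverage_Icc_affine [CompleteSpace E] {a b : ℝ} (hab : a < b) (c d : E) (p : ℝ) :
    ⨍ t in Icc a b, (c + (t - p) • d) = c + ((a + b) / 2 - p) • d := by
  have hne : b - a ≠ 0 := sub_ne_zero.2 hab.ne'
  have hintegral : ∫ t in a..b, (c + (t - p) • d)
      = (b - a) • c + ((b ^ 2 - a ^ 2) / 2 - (b - a) * p) • d := by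
    rw [intervalIntegral.integral_add (by simp)
        (Continuous.intervalIntegrable (by fun_prop) a b),
      intervalIntegral.integral_const, intervalIntegral.integral_smul_const,
      intervalIntegral.integral_sub (by simp) (by simp), integral_id,
      intervalIntegral.integral_const, smul_eq_mul]
  rw [setAverage_Icc_eq hab.le, hintegral]
  match_scalars <;> field_simp
  ring

theorem norm_setAverage_Icc_sub_affine_le [CompleteSpace E] {a b p C : ℝ} {g : ℝ → E} {c d : E}
    (hab : a < b) (hg : IntegrableOn g (Icc a b))
    (hC : ∀ t ∈ Icc a b, ‖g t - (c + (t - p) • d)‖ ≤ C) :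
    ‖(⨍ t in Icc a b, g t) - (c + ((a + b) / 2 - p) • d)‖ ≤ C := by
  have haff : IntegrableOn (fun t : ℝ => c + (t - p) • d) (Icc a b) :=
    Continuous.integrableOn_Icc (by fun_prop)
  have hvol : volume (Icc a b) ≠ 0 := by simp [hab]
  rw [← setAverage_Icc_affine hab, average, average,
    ← integral_sub hg.to_average haff.to_average]
  exact norm_setAverage_le_of_norm_le_const hvol measure_Icc_lt_top.ne hC

theorem isLittleO_setAverage_Icc_sub_affine [CompleteSpace E] {ι : Type*} {l : Filter ι}
    {g : ℝ → E} {g' : E} {s : Set ℝ} {p : ℝ} {a b r : ι → ℝ} (hg : HasDerivWithinAt g g' s p)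
    (hint : IntegrableOn g s) (hab : ∀ k, a k < b k) (hs : ∀ k, Icc (a k) (b k) ⊆ s)
    (hball : ∀ k, Icc (a k) (b k) ⊆ closedBall p (r k)) (hr : Tendsto r l (𝓝 0)) :
    (fun k => (⨍ t in Icc (a k) (b k), g t) - (g p + ((a k + b k) / 2 - p) • g')) =o[l] r := by
  refine isLittleO_iff.2 fun ε hε => ?_
  obtain ⟨δ, hδ, htaylor⟩ :=
    mem_nhdsWithin_iff.1 ((hasDerivWithinAt_iff_isLittleO.1 hg).def hε)
  filter_upwards [hr.eventually_lt_const hδ] with k hrδ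
  refine norm_setAverage_Icc_sub_affine_le (hab k) (hint.mono_set (hs k)) fun t ht => ?_
  have htr : ‖t - p‖ ≤ r k := mem_closedBall_iff_norm.1 (hball k ht)
  calc ‖g t - (g p + (t - p) • g')‖
      = ‖g t - g p - (t - p) • g'‖ := by rw [sub_sub]
    _ ≤ ε * ‖t - p‖ := htaylor ⟨mem_ball_iff_norm.2 (htr.trans_lt hrδ), hs k ht⟩
    _ ≤ ε * ‖r k‖ := by gcongr; exact htr.trans (le_abs_self _)

end Average

section Tree

variable {m : ℕ}

theorem psiV_append_singleton (x : List (Fin m)) (i : Fin m) :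
    psiV m (x ++ [i]) = psiV m x + (i : ℕ) * ((m : ℝ) ^ (x.length + 1))⁻¹ := by
  have hlen : x.length + 1 = (x ++ [i]).length := by simp
  rw [psiV, ← Fin.sum_congr' _ hlen, Fin.sum_univ_castSucc]
  simp [psiV]

theorem length_trunc (π : ℕ → Fin m) (k : ℕ) : (trunc m π k).length = k :=
  List.length_ofFn

theorem trunc_succ (π : ℕ → Fin m) (k : ℕ) : trunc m π (k + 1) = trunc m π k ++ [π k] := by
  rw [trunc, List.ofFn_succ_last]
  rfl

theorem psiV_trunc (π : ℕ → Fin m) (k : ℕ) :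
    psiV m (trunc m π k) = ∑ j ∈ Finset.range k, Real.ofDigitsTerm π j := by
  induction k with
  | zero => rfl
  | succ k ih =>
    rw [trunc_succ, psiV_append_singleton, ih, length_trunc, Finset.sum_range_succ,
      Real.ofDigitsTerm]

theorem psiB_eq_ofDigits (π : ℕ → Fin m) : psiB m π = Real.ofDigits π := rfl

theorem psiB_mem_Ix_trunc (π : ℕ → Fin m) (k : ℕ) : psiB m π ∈ Ix m (trunc m π k) := by
  rw [Ix, psiV_trunc, length_trunc, psiB_eq_ofDigits, Real.ofDigits_eq_sum_add_ofDigits π k]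
  have hscale : 0 ≤ ((m : ℝ) ^ k)⁻¹ := by positivity
  exact ⟨le_add_of_nonneg_right (mul_nonneg hscale (Real.ofDigits_nonneg _)),
    add_le_add_right (mul_le_of_le_one_right hscale (Real.ofDigits_le_one _)) _⟩

theorem Ix_append_singleton_subset (x : List (Fin m)) (i : Fin m) :
    Ix m (x ++ [i]) ⊆ Ix m x := by
  have hm : (0 : ℝ) < m := Nat.cast_pos.2 i.pos
  have hi : ((i : ℕ) : ℝ) + 1 ≤ m := mod_cast i.isLt
  rw [Ix, Ix, psiV_append_singleton, List.length_append, List.length_singleton]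
  refine Icc_subset_Icc (le_add_of_nonneg_right (by positivity)) ?_
  calc psiV m x + (i : ℕ) * ((m : ℝ) ^ (x.length + 1))⁻¹ + ((m : ℝ) ^ (x.length + 1))⁻¹
      = psiV m x + ((i : ℕ) + 1) * ((m : ℝ) ^ (x.length + 1))⁻¹ := by ring
    _ ≤ psiV m x + m * ((m : ℝ) ^ (x.length + 1))⁻¹ := by gcongr
    _ = psiV m x + ((m : ℝ) ^ x.length)⁻¹ := by rw [pow_succ']; field_simp

theorem Ix_subset_Icc_zero_one (x : List (Fin m)) : Ix m x ⊆ Icc 0 1 := by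
  induction x using List.reverseRecOn with
  | nil => simp [Ix, psiV]
  | append_singleton x i ih => exact (Ix_append_singleton_subset x i).trans ih

theorem Ix_subset_closedBall {x : List (Fin m)} {p : ℝ} (hp : p ∈ Ix m x) :
    Ix m x ⊆ closedBall p ((m : ℝ) ^ x.length)⁻¹ := fun t ht => by
  simpa only [mem_closedBall, add_sub_cancel_left] using Real.dist_le_of_mem_Icc ht hp

/-- The midpoint of the interval `I_x`, where an affine function takes its average over `I_x`. -/
noncomputable def centerIx (m : ℕ) (x : List (Fin m)) : ℝ :=
  psiV m x + ((m : ℝ) ^ x.length)⁻¹ / 2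

/-- The `i`-th component of the normal weight vector `ω_m`: the displacement, in units of the length
of `I_x`, from the centre of `I_x` to the centre of its `i`-th child. -/
noncomputable def normalWeight (m : ℕ) (i : Fin m) : ℝ :=
  (2 * ((i : ℕ) : ℝ) + 1 - m) / (2 * m)

theorem pow_length_mul_centerIx_append_singleton_sub (x : List (Fin m)) (i : Fin m) :
    (m : ℝ) ^ x.length * (centerIx m (x ++ [i]) - centerIx m x) = normalWeight m i := by
  have hm : (0 : ℝ) < m := Nat.cast_pos.2 i.pos
  simp only [centerIx, normalWeight, psiV_append_singleton, List.length_append,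
    List.length_singleton]
  field_simp
  ring

variable {E : Type*} [NormedAddCommGroup E] [NormedSpace ℝ E] [CompleteSpace E]
  {g : ℝ → E} {g' : E} {π : ℕ → Fin m}

theorem isLittleO_setAverage_Ix_sub_affine (hm : 1 < m) (hint : IntegrableOn g (Icc 0 1))
    (hg : HasDerivWithinAt g g' (Icc 0 1) (psiB m π)) {y : ℕ → List (Fin m)}
    (hy : ∀ k, Ix m (y k) ⊆ Ix m (trunc m π k)) :
    (fun k => (⨍ t in Ix m (y k), g t) -
        (g (psiB m π) + (centerIx m (y k) - psiB m π) • g'))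
      =o[atTop] fun k => ((m : ℝ) ^ k)⁻¹ := by
  have hm₀ : (0 : ℝ) < m := Nat.cast_pos.2 (Nat.zero_lt_of_lt hm)
  have hradius : Tendsto (fun k : ℕ => ((m : ℝ) ^ k)⁻¹) atTop (𝓝 0) :=
    (tendsto_pow_atTop_atTop_of_one_lt (Nat.one_lt_cast.2 hm)).inv_tendsto_atTop
  have hball (k : ℕ) : Ix m (y k) ⊆ closedBall (psiB m π) ((m : ℝ) ^ k)⁻¹ := by
    simpa only [length_trunc] using
      (hy k).trans (Ix_subset_closedBall (psiB_mem_Ix_trunc π k))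
  have hcenter (x : List (Fin m)) :
      (psiV m x + (psiV m x + ((m : ℝ) ^ x.length)⁻¹)) / 2 = centerIx m x := by
    rw [centerIx]
    ring
  simpa only [Ix, hcenter] using isLittleO_setAverage_Icc_sub_affine hg hint
    (fun k => lt_add_of_pos_right _ (inv_pos.2 (pow_pos hm₀ _)))
    (fun k => Ix_subset_Icc_zero_one (y k)) hball hradius

theorem tendsto_pow_smul_setAverage_Ix_sub (hm : 1 < m) (hint : IntegrableOn g (Icc 0 1))
    (hg : HasDerivWithinAt g g' (Icc 0 1) (psiB m π)) (i : Fin m) :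
    Tendsto (fun k => (m : ℝ) ^ k •
        ((⨍ t in Ix m (trunc m π k ++ [i]), g t) - ⨍ t in Ix m (trunc m π k), g t)) atTop
      (𝓝 (normalWeight m i • g')) := by
  have hchild := isLittleO_setAverage_Ix_sub_affine hm hint hg
    fun k => Ix_append_singleton_subset (trunc m π k) i
  have hparent := isLittleO_setAverage_Ix_sub_affine hm hint hg
    fun k => Subset.refl (Ix m (trunc m π k))
  refine tendsto_sub_nhds_zero_iff.1 <|
    (hchild.sub hparent).tendsto_inv_smul_nhds_zero.congr fun k => ?_
  rw [← pow_length_mul_centerIx_append_singleton_sub (trunc m π k) i, length_trunc, inv_inv]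
  module

theorem stmt8_general (hm : 1 < m) (hint : IntegrableOn g (Icc 0 1))
    (hg : HasDerivWithinAt g g' (Icc 0 1) (psiB m π)) (η : Fin m → ℝ) {u : List (Fin m) → E}
    (hu : ∀ x, u x = ⨍ t in Ix m x, g t) :
    Tendsto (fun k => (m : ℝ) ^ k •
        ∑ i, η i • (u (trunc m π k ++ [i]) - u (trunc m π k))) atTop
      (𝓝 ((∑ i, η i * normalWeight m i) • g')) := by
  simp only [hu, Finset.smul_sum, Finset.sum_smul, mul_smul]
  refine tendsto_finsetSum _ fun i _ => ?_
  simpa only [smul_comm (η i)] using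
    (tendsto_pow_smul_setAverage_Ix_sub hm hint hg i).const_smul (η i)

end Tree

theorem stmt8 (m : ℕ) (hm : 2 ≤ m) (g : ℝ → ℝ) (hg : ContDiffOn ℝ 2 g (Set.Icc 0 1))
    (η : Fin m → ℝ) (u : List (Fin m) → ℝ)
    (hu : ∀ x : List (Fin m), u x = ⨍ t in Ix m x, g t)
    (π : ℕ → Fin m) :
    Tendsto (fun k => (m : ℝ) ^ k *
        ∑ i : Fin m, η i * (u (trunc m π k ++ [i]) - u (trunc m π k))) atTop
      (nhds (derivWithin g (Set.Icc 0 1) (psiB m π) *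
        ∑ i : Fin m, η i * (2 * ((i : ℕ) : ℝ) + 1 - m) / (2 * m))) := by
  have hderiv := (hg.differentiableOn two_ne_zero _
    (Ix_subset_Icc_zero_one _ (psiB_mem_Ix_trunc π 0))).hasDerivWithinAt
  simpa only [smul_eq_mul, normalWeight, mul_div_assoc, mul_comm (derivWithin _ _ _)] using
    stmt8_general hm hg.continuousOn.integrableOn_Icc hderiv η hu
end

section
/- The strong comparison (and strong maximum) principle fails for β = 0: on the tree T_3 there exists a bounded 0-harmonic function u : T_3 → ℝ with u(x) ≥ 0 for all x ∈ T_3, u(x₀) = 0 for some vertex x₀ (one may take x₀ = (0), the first successor of the root), and u not identically zero (indeed u((2)) = 1). -/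
/-!
Prescribe arbitrary values at the successors of the root, continue each of them as a constant along
the whole branch it starts, and give the root their average. Each vertex is averaged over its
successors only, never over its predecessor, so the result is 0-harmonic. A zero on one branch
therefore does not propagate to any other branch.
-/

open scoped BigOperators

section ZeroHarmonic

variable {α M : Type*} [Fintype α] [AddCommMonoid M] [Module ℚ≥0 M]

/-- A function on the rooted tree of finite sequences over the alphabet `α` is 0-harmonic if its
value at each vertex is the average of its values at the successors. The successor `(x, i)` of `x`
is encoded as `x ++ [i]`. -/
def IsZeroHarmonic (u : List α → M) : Prop :=
  ∀ x, u x = 𝔼 i, u (x ++ [i])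

/-- The function on the rooted tree equal to `f a` on the branch of all sequences with first entry
`a`, and to the average of `f` at the root: the 0-harmonic function showing that values on distinct
branches are independent. -/
def branchExtension (f : α → M) : List α → M
  | [] => 𝔼 i, f i
  | a :: _ => f a

theorem isZeroHarmonic_branchExtension [Nonempty α] (f : α → M) :
    IsZeroHarmonic (branchExtension f)
  | [] => rfl
  | a :: _ => (Fintype.expect_const (f a)).symm

theorem branchExtension_mem_Icc [Nonempty α] [PartialOrder M] [IsOrderedAddMonoid M]
    [PosSMulMono ℚ≥0 M] {f : α → M} {c C : M} (hf : ∀ a, f a ∈ Set.Icc c C) :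
    ∀ x, branchExtension f x ∈ Set.Icc c C
  | [] => ⟨Finset.le_expect Finset.univ_nonempty fun a _ => (hf a).1,
      Finset.expect_le Finset.univ_nonempty fun a _ => (hf a).2⟩
  | a :: _ => hf a

end ZeroHarmonic

theorem stmt14_general {α : Type*} [Fintype α] {a b : α} (hab : a ≠ b) :
    ∃ u : List α → ℝ,
      (∃ C : ℝ, ∀ x, |u x| ≤ C) ∧ IsZeroHarmonic u ∧ (∀ x, 0 ≤ u x) ∧ u [a] = 0 ∧ u [b] = 1 := by
  classical
  have : Nonempty α := ⟨a⟩
  let f : α → ℝ := fun i => if i = b then 1 else 0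
  have hf : ∀ i, f i ∈ Set.Icc 0 1 := fun i => by
    by_cases hi : i = b <;> simp [f, hi]
  have hu : ∀ x, branchExtension f x ∈ Set.Icc 0 1 := branchExtension_mem_Icc hf
  exact ⟨branchExtension f, ⟨1, fun x => (abs_of_nonneg (hu x).1).trans_le (hu x).2⟩,
    isZeroHarmonic_branchExtension f, fun x => (hu x).1, if_neg hab, if_pos rfl⟩

theorem stmt14 :
    ∃ u : List (Fin 3) → ℝ,
      (∃ C : ℝ, ∀ x : List (Fin 3), |u x| ≤ C) ∧
      (∀ x : List (Fin 3), u x = (1 / 3) * ∑ i : Fin 3, u (x ++ [i])) ∧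
      (∀ x : List (Fin 3), 0 ≤ u x) ∧
      u [(0 : Fin 3)] = 0 ∧ u [(2 : Fin 3)] = 1 := by
  simpa [IsZeroHarmonic, Fintype.expect_eq_sum_div_card, div_eq_inv_mul] using
    stmt14_general (show (0 : Fin 3) ≠ 2 by decide)
end
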